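/- Let p = (p_1, ..., p_n) be integers ≥ 2 and L(p) the abelian group generated by x_1, ..., x_n, c with p_i x_i = c for all i. The torsion subgroup of L(p) together with the quotient by torsion: L(p)/torsion ≅ Z, and the image of c in L(p)/torsion is divisible by each p_i. -/

import Mathlib

/-- For `p = (p_1, ..., p_n)` with all `p_i ≥ 2`, the group `L(p)` (generated by
`x_1, ..., x_n, c` with `p_i x_i = c`) modulo its torsion subgroup is isomorphic to `ℤ`,
and the image of `c` in `L(p)/torsion` is divisible by each `p_i`. -/
theorem stmt14 (n : ℕ) (p : Fin n → ℕ) (hp : ∀ i, 2 ≤ p i)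
    (L : Type) [AddCommGroup L] [Module ℤ L]
    (e : L ≃ₗ[ℤ] ((Fin (n + 1) → ℤ) ⧸ Submodule.span ℤ
        {v : Fin (n + 1) → ℤ | ∃ i : Fin n,
          v = (p i : ℤ) • Pi.single i.castSucc 1 - Pi.single (Fin.last n) 1}))
    (c : L)
    (hc : e c = Submodule.Quotient.mk (Pi.single (Fin.last n) 1)) :
    Nonempty ((L ⧸ Submodule.torsion ℤ L) ≃ₗ[ℤ] ℤ) ∧
      ∀ i : Fin n, ∃ y : L ⧸ Submodule.torsion ℤ L,
        (p i : ℤ) • y = Submodule.Quotient.mk c := by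
  classical
  obtain rfl : ‹Module ℤ L› = AddCommGroup.toIntModule L := Subsingleton.elim _ _
  let S := Submodule.span ℤ
        {v : Fin (n + 1) → ℤ | ∃ i : Fin n,
          v = (p i : ℤ) • Pi.single i.castSucc 1 - Pi.single (Fin.last n) 1}
  let P : ℤ := ∏ i, (p i : ℤ)
  let Q : Fin n → ℤ := fun i => ∏ j ∈ Finset.univ.erase i, (p j : ℤ)
  have hPQ : ∀ i, (p i : ℤ) * Q i = P := fun i =>
    Finset.mul_prod_erase Finset.univ (fun j => (p j : ℤ)) (Finset.mem_univ i)
  have hP : P ≠ 0 := Finset.prod_ne_zero_iff.mpr fun i _ => by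
    have := hp i
    omega
  let w : Fin (n + 1) → ℤ := Fin.snoc (α := fun _ => ℤ) Q P
  let φ : (Fin (n + 1) → ℤ) →ₗ[ℤ] ℤ := Fintype.linearCombination ℤ w
  have hφ : ∀ k, φ (Pi.single k 1) = w k := fun k => by
    simp [φ, Fintype.linearCombination_apply_single]
  have hwl : w (Fin.last n) = P := by simp [w]
  have hwc : ∀ i : Fin n, w i.castSucc = Q i := fun i => by simp [w]
  have hker : S ≤ LinearMap.ker φ := by
    refine Submodule.span_le.mpr ?_
    rintro v ⟨i, rfl⟩
    rw [SetLike.mem_coe, LinearMap.mem_ker, map_sub, map_smul, hφ, hφ, hwl, hwc, smul_eq_mul,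
      hPQ, sub_self]
  let f : L →ₗ[ℤ] ℤ := (S.liftQ φ hker).comp e.toLinearMap
  let g : (Fin (n + 1) → ℤ) →ₗ[ℤ] L := e.symm.toLinearMap.comp S.mkQ
  have hfg : ∀ v, f (g v) = φ v := fun v => by simp [f, g]
  have hgs : ∀ x, ∃ v, g v = x := fun x => by
    obtain ⟨v, hv⟩ := S.mkQ_surjective (e x)
    exact ⟨v, by simp only [g, LinearMap.comp_apply, hv]; simp⟩
  have hgc : g (Pi.single (Fin.last n) 1) = c := by
    rw [← e.symm_apply_apply c, hc]; rfl
  have hgi : ∀ i : Fin n, (p i : ℤ) • g (Pi.single i.castSucc 1) = c := fun i => by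
    rw [← hgc, ← map_smul, ← sub_eq_zero, ← map_sub]
    have : S.mkQ ((p i : ℤ) • Pi.single i.castSucc 1 - Pi.single (Fin.last n) 1) = 0 := by
      rw [Submodule.mkQ_apply, Submodule.Quotient.mk_eq_zero]
      exact Submodule.subset_span ⟨i, rfl⟩
    simp only [g, LinearMap.comp_apply, this, map_zero]
  have key : P • g = φ.smulRight c := by
    refine (Pi.basisFun ℤ (Fin (n + 1))).ext fun k => ?_
    rw [Pi.basisFun_apply, LinearMap.smul_apply, LinearMap.smulRight_apply, hφ]
    refine Fin.lastCases ?_ (fun i => ?_) k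
    · rw [hgc, hwl]
    · rw [hwc, ← hPQ i, mul_comm, mul_smul, hgi]
  have hfc : f c = P := by rw [← hgc, hfg, hφ, hwl]
  have hkerf : LinearMap.ker f = Submodule.torsion ℤ L := by
    ext x
    rw [LinearMap.mem_ker, Submodule.mem_torsion_iff]
    constructor
    · intro hx
      obtain ⟨v, rfl⟩ := hgs x
      refine ⟨⟨P, mem_nonZeroDivisors_of_ne_zero hP⟩, ?_⟩
      have h := LinearMap.congr_fun key v
      rw [LinearMap.smul_apply, LinearMap.smulRight_apply, ← hfg, hx, zero_smul] at h
      exact h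
    · rintro ⟨a, ha⟩
      have h : (a : ℤ) • x = 0 := ha
      have h2 := congrArg f h
      rw [map_smul, map_zero, smul_eq_mul] at h2
      exact (mul_eq_zero.mp h2).resolve_left (nonZeroDivisors.ne_zero a.2)
  refine ⟨?_, fun i => ⟨Submodule.Quotient.mk (g (Pi.single i.castSucc 1)), ?_⟩⟩
  · obtain ⟨a, ha⟩ := (IsPrincipalIdealRing.principal (LinearMap.range f)).principal
    have ha0 : a ≠ 0 := by
      rintro rfl
      have : f c ∈ LinearMap.range f := ⟨c, rfl⟩
      rw [ha, hfc] at this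
      simp at this
      exact hP this
    exact ⟨AddEquiv.toIntLinearEquiv <| LinearEquiv.toAddEquiv <| (Submodule.quotEquivOfEq _ _ hkerf.symm).trans <| f.quotKerEquivRange.trans <|
      (LinearEquiv.ofEq _ _ ha).trans (LinearEquiv.toSpanNonzeroSingleton ℤ ℤ a ha0).symm⟩
  · rw [← Submodule.Quotient.mk_smul, hgi]
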